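/- Let I = [x0, x1] be a compact interval with x0 < x1, let D ⊆ ℝ³, and let f : ℝ³ → ℝ³ be continuous. Fix positive reals ε_y, ε_z and integers n > k > 1, set ε̂_z = 2(n−k)ε_z/((n−1)(x1−x0)), and for a graph curve α over I with polynomial coordinate functions write U_α = U(α, ε_y, ε_y, ε_z, ε̂_z) (small u-tube) and V_α = U(α, ε_y, ε_y, k·ε_z, ε̂_z) (big u-tube). Say that U_α maps through V_β if every γ ∈ U_α admits a C¹ function s : I → I with s(I) ⊆ (x0, x1) such that f∘γ∘s is a graph curve lying in the C¹-interior of V_β. Suppose K and L are finite sets of graph curves over I with polynomial coordinates such that the family Ω := ⋃_{α∈K} U_α = ⋃_{β∈L} V_β is nonempty and the two unions are equal, and suppose that for every α ∈ K there exists β ∈ L such that U_α maps through V_β. Then every curve γ ∈ Ω contains a point p in its image with fⁿ(p) ∈ D for all integers n ≥ 1. -/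

import Mathlib

open Set

/-- A graph curve over `I`: a `C¹` map `γ : I → ℝ³` of the form `γ t = (t, γ_y t, γ_z t)`. -/
def IsGraphCurve (I : Set ℝ) (γ : ℝ → ℝ × ℝ × ℝ) : Prop :=
  ContDiffOn ℝ 1 γ I ∧ ∀ t ∈ I, (γ t).1 = t

/-- A graph curve (over all of ℝ) with polynomial coordinate functions. -/
def IsPolyGraphCurve (α : ℝ → ℝ × ℝ × ℝ) : Prop :=
  (∀ t : ℝ, (α t).1 = t) ∧
    (∃ P : Polynomial ℝ, ∀ t : ℝ, (α t).2.1 = Polynomial.eval t P) ∧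
    (∃ Q : Polynomial ℝ, ∀ t : ℝ, (α t).2.2 = Polynomial.eval t Q)

/-- The `C¹`-distance between two curves over `I`. -/
noncomputable def C1dist (I : Set ℝ) (γ δ : ℝ → ℝ × ℝ × ℝ) : ℝ :=
  (⨆ t : I, ‖γ (t : ℝ) - δ (t : ℝ)‖) +
    (⨆ t : I, ‖derivWithin γ I (t : ℝ) - derivWithin δ I (t : ℝ)‖)

/-- `γ` lies in the `C¹`-interior of the family `Ω` of graph curves over `I`. -/
def InC1Interior (I : Set ℝ) (Ω : Set (ℝ → ℝ × ℝ × ℝ)) (γ : ℝ → ℝ × ℝ × ℝ) : Prop :=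
  ∃ δ > 0, ∀ η : ℝ → ℝ × ℝ × ℝ, IsGraphCurve I η → C1dist I γ η < δ → η ∈ Ω

/-- The u-tube `U(α, εy, εy', εz, εz')` around the graph curve `α` over `I`,
consisting of graph curves with image in `D`. -/
def uTube (D : Set (ℝ × ℝ × ℝ)) (I : Set ℝ) (α : ℝ → ℝ × ℝ × ℝ)
    (εy εy' εz εz' : ℝ) : Set (ℝ → ℝ × ℝ × ℝ) :=
  {γ | IsGraphCurve I γ ∧ (∀ t ∈ I, γ t ∈ D) ∧
    (∀ t ∈ I, |(γ t).2.1 - (α t).2.1| ≤ εy) ∧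
    (∀ t ∈ I, |derivWithin (fun u => (γ u).2.1) I t
      - derivWithin (fun u => (α u).2.1) I t| ≤ εy') ∧
    (∀ t ∈ I, |(γ t).2.2 - (α t).2.2| ≤ εz) ∧
    (∀ t ∈ I, |derivWithin (fun u => (γ u).2.2) I t
      - derivWithin (fun u => (α u).2.2) I t| ≤ εz')}

/-- `U` maps through `V` under `f`: every curve of `U` admits a reparametrisation `s`
with values in the interior of `I = [x0, x1]` such that `f ∘ γ ∘ s` is a graph curve
lying in the `C¹`-interior of `V`. -/
def MapsThrough (x0 x1 : ℝ) (f : ℝ × ℝ × ℝ → ℝ × ℝ × ℝ)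
    (U V : Set (ℝ → ℝ × ℝ × ℝ)) : Prop :=
  ∀ γ ∈ U, ∃ s : ℝ → ℝ, ContDiffOn ℝ 1 s (Icc x0 x1) ∧
    (∀ t ∈ Icc x0 x1, s t ∈ Ioo x0 x1) ∧
    IsGraphCurve (Icc x0 x1) (f ∘ γ ∘ s) ∧
    InC1Interior (Icc x0 x1) V (f ∘ γ ∘ s)

/-!
Iterating the mapping-through hypothesis from a curve `c 0` of the family gives curves `c m` of the
family and self-maps `s m` of `I` with `f ∘ c m ∘ s m = c (m + 1)`. The inverse sequence
`I ← I ← I ← ⋯` of the maps `s m` has a thread `t m = s m (t (m + 1))`, because `I` is compact, and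
`f (c m (t m)) = c (m + 1) (t (m + 1))`: the orbit of `c 0 (t 0)` visits one curve of the family
after another, and all of these lie in `D`.
-/

open CategoryTheory in
theorem exists_thread_of_compact_t2 {X : ℕ → Type*} [∀ m, TopologicalSpace (X m)]
    [∀ m, CompactSpace (X m)] [∀ m, T2Space (X m)] [∀ m, Nonempty (X m)]
    {σ : ∀ m, X (m + 1) → X m} (hσ : ∀ m, Continuous (σ m)) :
    ∃ t : ∀ m, X m, ∀ m, σ m (t (m + 1)) = t m := by
  let F : ℕᵒᵖ ⥤ TopCat := Functor.ofOpSequence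
    (X := fun m => TopCat.of (X m)) fun m => TopCat.ofHom ⟨σ m, hσ m⟩
  have : ∀ j, Nonempty (F.obj j) := fun j => inferInstanceAs (Nonempty (X j.unop))
  have : ∀ j, CompactSpace (F.obj j) := fun j => inferInstanceAs (CompactSpace (X j.unop))
  have : ∀ j, T2Space (F.obj j) := fun j => inferInstanceAs (T2Space (X j.unop))
  obtain ⟨t, ht⟩ := TopCat.nonempty_limitCone_of_compact_t2_cofiltered_system F
  refine ⟨fun m => t (Opposite.op m), fun m => ?_⟩
  have hbond := ht (homOfLE m.le_succ).op
  rwa [Functor.ofOpSequence_map_homOfLE_succ] at hbond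

section MapsAcross

variable {X E : Type*} [TopologicalSpace X]

/-- The curve `γ` maps across the curve `δ` over `I`: on `I`, `δ` is the image under `f` of a
reparametrisation of `γ`. This is the relation between single curves that underlies `MapsThrough`;
the reparametrisation is only required to be a continuous self-map of `I`. -/
def MapsAcross (f : E → E) (I : Set X) (γ δ : X → E) : Prop :=
  ∃ s : X → X, ContinuousOn s I ∧ MapsTo s I I ∧ EqOn (f ∘ γ ∘ s) δ I

variable {I : Set X} {f : E → E}

theorem exists_forall_iterate_mem_image [T2Space X] (hI : IsCompact I) (hne : I.Nonempty)
    {c : ℕ → X → E} (hc : ∀ m, MapsAcross f I (c m) (c (m + 1))) :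
    ∃ t ∈ I, ∀ m, f^[m] (c 0 t) ∈ c m '' I := by
  choose s hs_cont hs_maps hs_eq using hc
  have := hne.to_subtype
  have := isCompact_iff_compactSpace.1 hI
  obtain ⟨t, ht⟩ := exists_thread_of_compact_t2 (X := fun _ => I) fun m =>
    (hs_cont m).mapsToRestrict (hs_maps m)
  have horbit (m : ℕ) : f^[m] (c 0 (t 0)) = c m (t m) := by
    induction m with
    | zero => rfl
    | succ m ih =>
      calc f^[m + 1] (c 0 (t 0)) = f (c m (t m)) := by rw [Function.iterate_succ_apply', ih]
        _ = f (c m (s m (t (m + 1)))) := by rw [← ht m, MapsTo.val_restrict_apply]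
        _ = c (m + 1) (t (m + 1)) := hs_eq m (t (m + 1)).2
  exact ⟨t 0, (t 0).2, fun m => ⟨t m, (t m).2, (horbit m).symm⟩⟩

theorem exists_forall_iterate_mem [T2Space X] (hI : IsCompact I) (hne : I.Nonempty) {D : Set E}
    {Ω : Set (X → E)} (hD : ∀ γ ∈ Ω, MapsTo γ I D)
    (hstep : ∀ γ ∈ Ω, ∃ δ ∈ Ω, MapsAcross f I γ δ) {γ : X → E} (hγ : γ ∈ Ω) :
    ∃ p ∈ γ '' I, ∀ m, f^[m] p ∈ D := by
  have : Nonempty (X → E) := ⟨γ⟩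
  choose! img himg_mem himg using hstep
  have hc (m : ℕ) : img^[m] γ ∈ Ω := MapsTo.iterate himg_mem m hγ
  obtain ⟨t, ht, horbit⟩ := exists_forall_iterate_mem_image hI hne (c := fun m => img^[m] γ)
    fun m => by simpa only [Function.iterate_succ_apply'] using himg _ (hc m)
  exact ⟨γ t, mem_image_of_mem γ ht, fun m => (hD _ (hc m)).image_subset (horbit m)⟩

end MapsAcross

theorem C1dist_self (I : Set ℝ) (γ : ℝ → ℝ × ℝ × ℝ) : C1dist I γ γ = 0 := by
  simp [C1dist]

theorem InC1Interior.mem {I : Set ℝ} {Ω : Set (ℝ → ℝ × ℝ × ℝ)} {γ : ℝ → ℝ × ℝ × ℝ}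
    (h : InC1Interior I Ω γ) (hγ : IsGraphCurve I γ) : γ ∈ Ω := by
  obtain ⟨δ, hδ, hΩ⟩ := h
  exact hΩ γ hγ ((C1dist_self I γ).trans_lt hδ)

theorem MapsThrough.exists_mapsAcross {x0 x1 : ℝ} {f : ℝ × ℝ × ℝ → ℝ × ℝ × ℝ}
    {U V : Set (ℝ → ℝ × ℝ × ℝ)} (h : MapsThrough x0 x1 f U V) {γ : ℝ → ℝ × ℝ × ℝ} (hγ : γ ∈ U) :
    ∃ δ ∈ V, MapsAcross f (Icc x0 x1) γ δ := by
  obtain ⟨s, hs, hs_mem, hgraph, hint⟩ := h γ hγ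
  exact ⟨f ∘ γ ∘ s, hint.mem hgraph, s, hs.continuousOn,
    fun t ht => Ioo_subset_Icc_self (hs_mem t ht), eqOn_refl _ _⟩

theorem stmt7_general {x0 x1 : ℝ} (hx : x0 < x1) {D : Set (ℝ × ℝ × ℝ)}
    {f : ℝ × ℝ × ℝ → ℝ × ℝ × ℝ} {εy εy' εz εz' δy δy' δz δz' : ℝ}
    {K L : Set (ℝ → ℝ × ℝ × ℝ)}
    (hcover : ⋃ β ∈ L, uTube D (Icc x0 x1) β δy δy' δz δz' ⊆
      ⋃ α ∈ K, uTube D (Icc x0 x1) α εy εy' εz εz')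
    (hthrough : ∀ α ∈ K, ∃ β ∈ L,
      MapsThrough x0 x1 f (uTube D (Icc x0 x1) α εy εy' εz εz')
        (uTube D (Icc x0 x1) β δy δy' δz δz'))
    {γ : ℝ → ℝ × ℝ × ℝ} (hγ : γ ∈ ⋃ α ∈ K, uTube D (Icc x0 x1) α εy εy' εz εz') :
    ∃ p ∈ γ '' Icc x0 x1, ∀ m : ℕ, f^[m] p ∈ D := by
  refine exists_forall_iterate_mem isCompact_Icc (nonempty_Icc.2 hx.le) ?_ ?_ hγ
  · intro γ hγ
    obtain ⟨α, -, hγα⟩ := mem_iUnion₂.1 hγ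
    exact hγα.2.1
  · intro γ hγ
    obtain ⟨α, hα, hγα⟩ := mem_iUnion₂.1 hγ
    obtain ⟨β, hβ, hαβ⟩ := hthrough α hα
    obtain ⟨δ, hδ, hγδ⟩ := hαβ.exists_mapsAcross hγα
    exact ⟨δ, hcover (mem_biUnion hβ hδ), hγδ⟩

/-- The honest core of Theorem 1: if the nonempty family `Ω` is simultaneously the union of
the small u-tubes around the finitely many curves of `K` and of the big u-tubes around the
finitely many curves of `L`, and every small u-tube maps through some big u-tube, then every
curve of `Ω` carries a point whose forward orbit under `f` stays in `D`. -/
theorem stmt7 (x0 x1 : ℝ) (hx : x0 < x1) (D : Set (ℝ × ℝ × ℝ))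
    (f : ℝ × ℝ × ℝ → ℝ × ℝ × ℝ) (hf : Continuous f)
    (εy εz : ℝ) (hεy : 0 < εy) (hεz : 0 < εz)
    (n k : ℕ) (hk : 1 < k) (hkn : k < n)
    (εz' : ℝ)
    (hεz' : εz' = 2 * ((n : ℝ) - (k : ℝ)) * εz / (((n : ℝ) - 1) * (x1 - x0)))
    (K L : Set (ℝ → ℝ × ℝ × ℝ)) (hKfin : K.Finite) (hLfin : L.Finite)
    (hKpoly : ∀ α ∈ K, IsPolyGraphCurve α) (hLpoly : ∀ β ∈ L, IsPolyGraphCurve β)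
    (Ω : Set (ℝ → ℝ × ℝ × ℝ))
    (hΩK : Ω = ⋃ α ∈ K, uTube D (Icc x0 x1) α εy εy εz εz')
    (hΩL : Ω = ⋃ β ∈ L, uTube D (Icc x0 x1) β εy εy ((k : ℝ) * εz) εz')
    (hne : Ω.Nonempty)
    (hthrough : ∀ α ∈ K, ∃ β ∈ L,
      MapsThrough x0 x1 f (uTube D (Icc x0 x1) α εy εy εz εz')
        (uTube D (Icc x0 x1) β εy εy ((k : ℝ) * εz) εz')) :
    ∀ γ ∈ Ω, ∃ p ∈ γ '' Icc x0 x1, ∀ m : ℕ, 1 ≤ m → f^[m] p ∈ D := by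
  intro γ hγ
  obtain ⟨p, hp, h⟩ := stmt7_general hx (hΩL.symm.trans hΩK).subset hthrough (hΩK.subset hγ)
  exact ⟨p, hp, fun m _ => h m⟩
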